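/- Let I ⊂ ℝ be a finite union of compact intervals, ρ : I → [0,∞) a continuous function that is not almost everywhere zero, and n ≥ 1 an integer. Define τ(t₁,t₂,t₃) := ∫_{I^n} Δ_n(z)² ∏_{k=1}^n e^{t₁ z_k + t₂ z_k² + t₃ z_k³} ρ(z_k) dz_k. Then τ > 0 everywhere, and log τ satisfies the first KP equation: (∂⁴/∂t₁⁴) log τ + 3 (∂²/∂t₂²) log τ − 4 (∂²/∂t₁∂t₃) log τ + 6 ( (∂²/∂t₁²) log τ )² = 0 at every point (t₁,t₂,t₃) ∈ ℝ³. -/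

import Mathlib

open MeasureTheory Filter Real
open scoped BigOperators Topology

noncomputable section

/-- Vandermonde determinant `Δ_n(z) = ∏_{i<j} (z_i - z_j)`. -/
def vdm {n : ℕ} (z : Fin n → ℝ) : ℝ :=
  ∏ i : Fin n, ∏ j ∈ Finset.Ioi i, (z i - z j)

/-- `τ(t₁,t₂,t₃) = ∫_{I^n} Δ_n(z)² ∏ e^{t₁z_k + t₂z_k² + t₃z_k³} ρ(z_k) dz`. -/
def tau9 (I : Set ℝ) (ρ : ℝ → ℝ) (n : ℕ) (t₁ t₂ t₃ : ℝ) : ℝ :=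
  ∫ z in Set.univ.pi fun _ : Fin n => I,
    vdm z ^ 2 *
      ∏ k, (Real.exp (t₁ * z k + t₂ * z k ^ 2 + t₃ * z k ^ 3) * ρ (z k))

/-!
By Andréief's identity, `τ` is `n!` times the Hankel determinant of the moments
`m_a = ∫_I z ^ a * exp (t₁ z + t₂ z² + t₃ z³) * ρ z dz`, and `∂ m_a / ∂ t_k = m_{a+k}`.
Shifting the columns of the Hankel matrix by the parts of a partition `λ` gives determinants `s_λ`,
with `s_∅` the Hankel determinant itself, on which `∂ / ∂ t_k` acts as multiplication by the `k`-th
power sum acts on Schur functions. Multiplied by `τ²`, the KP equation for `log τ` becomes Hirota's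
bilinear equation, and expressing the derivatives of `s_∅` through the `s_λ` with `|λ| ≤ 4` turns
its left-hand side into a multiple of `s_∅ s_(2,2) - s_(1) s_(2,1) + s_(2) s_(1,1)`, which vanishes
by the three-term Plücker relation.
-/

section Determinant

variable {ι R : Type*} [Fintype ι] [DecidableEq ι] [CommRing R]

theorem det_updateCol_updateCol_col (A : Matrix ι ι R) {p q : ι} (hpq : p ≠ q) (w : ι → R) :
    ((A.updateCol q w).updateCol p (A.col q)).det = -(A.updateCol p w).det := by
  have hswap : (A.updateCol q w).updateCol p (A.col q) =
      (A.updateCol p w).submatrix id (Equiv.swap p q) := by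
    ext i j
    rcases eq_or_ne j p with rfl | hjp
    · simp [hpq.symm]
    rcases eq_or_ne j q with rfl | hjq
    · simp [hjp]
    · simp [hjp, hjq, Equiv.swap_apply_of_ne_of_ne hjp hjq]
  rw [hswap, Matrix.det_permute', Equiv.Perm.sign_swap hpq]
  simp

/-- Three-term Plücker relation: expand `det A • v` in the columns of `A` by Cramer's rule;
only the columns `p` and `q` contribute. -/
theorem det_mul_det_updateCol_updateCol (A : Matrix ι ι R) {p q : ι} (hpq : p ≠ q)
    (v w : ι → R) :
    A.det * ((A.updateCol p v).updateCol q w).det =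
      (A.updateCol p v).det * (A.updateCol q w).det -
        (A.updateCol q v).det * (A.updateCol p w).det := by
  have cramer_expansion : A.det • v = ∑ j, A.cramer v j • A.col j := by
    rw [← Matrix.mulVec_cramer, Matrix.mulVec_eq_sum]
    simp [Matrix.col_def]
  have cramer_col (j : ι) (hj : j ≠ q) :
      (A.updateCol q w).cramer (A.col j) = Pi.single j (A.updateCol q w).det :=
    Matrix.cramer_row_self _ _ _ fun i => by simp [hj]
  calc A.det * ((A.updateCol p v).updateCol q w).det
      = (A.updateCol q w).cramer (A.det • v) p := by
        rw [map_smul, Pi.smul_apply, Matrix.cramer_apply, Matrix.updateCol_comm _ hpq, smul_eq_mul]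
    _ = ∑ j, A.cramer v j * (A.updateCol q w).cramer (A.col j) p := by
        simp [cramer_expansion]
    _ = A.cramer v p * (A.updateCol q w).cramer (A.col p) p +
          A.cramer v q * (A.updateCol q w).cramer (A.col q) p :=
        Fintype.sum_eq_add p q hpq fun j hj => by
          rw [cramer_col j hj.2, Pi.single_eq_of_ne hj.1.symm, mul_zero]
    _ = _ := by
        rw [cramer_col p hpq, Pi.single_eq_same, Matrix.cramer_apply _ (A.col q),
          det_updateCol_updateCol_col A hpq]
        simp only [Matrix.cramer_apply]
        ring

theorem det_mul_det_eq_sum_sum_perm (A B : Matrix ι ι R) :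
    A.det * B.det = ∑ σ : Equiv.Perm ι, ∑ κ : Equiv.Perm ι,
      (Equiv.Perm.sign σ * Equiv.Perm.sign κ : ℤ) * ∏ k, (A (σ k) k * B (κ k) k) := by
  simp only [Matrix.det_apply', Finset.sum_mul_sum, Finset.prod_mul_distrib, Int.cast_mul]
  exact Finset.sum_congr rfl fun σ _ => Finset.sum_congr rfl fun κ _ => by ring

theorem sum_sum_perm_sign_mul_prod (C : Matrix ι ι R) :
    ∑ σ : Equiv.Perm ι, ∑ κ : Equiv.Perm ι,
      (Equiv.Perm.sign σ * Equiv.Perm.sign κ : ℤ) * ∏ k, C (σ k) (κ k) =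
      (Fintype.card ι).factorial * C.det := by
  have inner_sum (κ : Equiv.Perm ι) : ∑ σ : Equiv.Perm ι,
      (Equiv.Perm.sign σ * Equiv.Perm.sign κ : ℤ) * ∏ k, C (σ k) (κ k) = C.det := by
    have sign_sq : (Equiv.Perm.sign κ : R) * Equiv.Perm.sign κ = 1 := by
      norm_cast
      simp
    calc _ = Equiv.Perm.sign κ * (C.submatrix id κ).det := by
          rw [Matrix.det_apply', Finset.mul_sum]
          refine Finset.sum_congr rfl fun σ _ => ?_
          simp only [Matrix.submatrix_apply, id, Int.cast_mul]
          ring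
      _ = C.det := by rw [Matrix.det_permute', ← mul_assoc, sign_sq, one_mul]
  rw [Finset.sum_comm, Finset.sum_congr rfl fun κ _ => inner_sum κ]
  simp [Fintype.card_perm]

end Determinant

theorem hasDerivAt_matrix_det {ι 𝕜 : Type*} [Fintype ι] [DecidableEq ι] [NontriviallyNormedField 𝕜]
    {A : 𝕜 → Matrix ι ι 𝕜} {A' : Matrix ι ι 𝕜} {s : 𝕜}
    (hA : ∀ i j, HasDerivAt (fun x => A x i j) (A' i j) s) :
    HasDerivAt (fun x => (A x).det) (∑ j, ((A s).updateCol j (A'.col j)).det) s := by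
  simp only [Matrix.det_apply']
  rw [Finset.sum_comm]
  refine HasDerivAt.fun_sum fun σ _ => ?_
  rw [← Finset.mul_sum]
  refine HasDerivAt.const_mul _ ?_
  refine (HasDerivAt.fun_finsetProd fun i _ => hA (σ i) i).congr_deriv ?_
  refine Finset.sum_congr rfl fun j _ => ?_
  rw [← Finset.prod_erase_mul _ _ (Finset.mem_univ j), smul_eq_mul]
  congr 1
  · exact Finset.prod_congr rfl fun i hi => by simp [Finset.ne_of_mem_erase hi]
  · simp

section Andreief

variable {ι α 𝕜 : Type*} [Fintype ι] [DecidableEq ι] [MeasurableSpace α] {μ : Measure α}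
  [SigmaFinite μ] [RCLike 𝕜] {f g : ι → α → 𝕜}

theorem integrable_det_mul_det (hfg : ∀ i j, Integrable (fun x => f i x * g j x) μ) :
    Integrable (fun z : ι → α => (Matrix.of fun i k => f i (z k)).det *
      (Matrix.of fun i k => g i (z k)).det) (Measure.pi fun _ => μ) := by
  simp only [det_mul_det_eq_sum_sum_perm, Matrix.of_apply]
  exact integrable_finsetSum _ fun σ _ => integrable_finsetSum _ fun κ _ =>
    (Integrable.fintype_prod fun k => hfg (σ k) (κ k)).const_mul _

/-- Andréief's identity. -/
theorem integral_det_mul_det (hfg : ∀ i j, Integrable (fun x => f i x * g j x) μ) :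
    ∫ z : ι → α, (Matrix.of fun i k => f i (z k)).det * (Matrix.of fun i k => g i (z k)).det
        ∂(Measure.pi fun _ => μ) =
      (Fintype.card ι).factorial * (Matrix.of fun i j => ∫ x, f i x * g j x ∂μ).det := by
  have term_integrable (σ κ : Equiv.Perm ι) :=
    (Integrable.fintype_prod fun k => hfg (σ k) (κ k)).const_mul
      ((Equiv.Perm.sign σ * Equiv.Perm.sign κ : ℤ) : 𝕜)
  simp only [det_mul_det_eq_sum_sum_perm, Matrix.of_apply]
  rw [← sum_sum_perm_sign_mul_prod,
    integral_finsetSum _ fun σ _ => integrable_finsetSum _ fun κ _ => term_integrable σ κ]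
  refine Finset.sum_congr rfl fun σ _ => ?_
  rw [integral_finsetSum _ fun κ _ => term_integrable σ κ]
  refine Finset.sum_congr rfl fun κ _ => ?_
  rw [integral_const_mul,
    integral_fintype_prod_eq_prod fun (k : ι) x => f (σ k) x * g (κ k) x]
  rfl

end Andreief
section SchurDeterminant

variable {R : Type*}

/-- The Hankel matrix of the sequence `m`, in decreasing order of the indices, whose `j`-th column
is shifted by the `j`-th row length `lam j` of a partition. -/
def shiftedHankel (n : ℕ) (m : ℕ → R) (lam : ℕ → ℕ) : Matrix (Fin n) (Fin n) R :=
  Matrix.of fun i j => m (i.rev + j.rev + lam j)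

open Classical in
/-- The determinant of `shiftedHankel n m lam`. It is the analogue of the Schur function `s_lam`:
differentiating the `m a` acts on it like multiplication by power sums. As for Schur polynomials
in `n` variables, it is declared to be `0` if `lam` has a nonzero part beyond the first `n`; with
this convention the identities below hold for every `n`. -/
def schurDet [CommRing R] (n : ℕ) (m : ℕ → R) (lam : ℕ → ℕ) : R :=
  if ∀ j, n ≤ j → lam j = 0 then (shiftedHankel n m lam).det else 0

variable {n : ℕ}

theorem shiftedHankel_update (m : ℕ → R) (lam : ℕ → ℕ) (j : Fin n) (v : ℕ) :
    shiftedHankel n m (Function.update lam j v) =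
      (shiftedHankel n m lam).updateCol j fun i => m (i.rev + j.rev + v) := by
  ext i k
  rcases eq_or_ne k j with rfl | hkj
  · simp [shiftedHankel]
  · simp [shiftedHankel, hkj, Fin.val_ne_of_ne hkj]

theorem shiftedHankel_update_add_sub (m : ℕ → R) (lam : ℕ → ℕ) {p q : Fin n} (hpq : p ≤ q)
    (v : ℕ) :
    shiftedHankel n m (Function.update lam q (v + (q - p))) =
      (shiftedHankel n m lam).updateCol q fun i => m (i.rev + p.rev + v) := by
  have exponent_eq : (q.rev : ℕ) + (v + (q - p)) = p.rev + v := by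
    simp only [Fin.val_rev]
    lia
  simp only [shiftedHankel_update, add_assoc, exponent_eq]

variable [CommRing R] {m : ℕ → R} {lam : ℕ → ℕ}

theorem schurDet_eq_det (hlam : ∀ j, n ≤ j → lam j = 0) :
    schurDet n m lam = (shiftedHankel n m lam).det :=
  if_pos hlam

theorem schurDet_eq_zero (hlam : ¬∀ j, n ≤ j → lam j = 0) : schurDet n m lam = 0 :=
  if_neg hlam

theorem schurDet_zero (n : ℕ) (m : ℕ → R) :
    schurDet n m 0 = (Matrix.of fun i j : Fin n => m (i + j)).det := by
  rw [schurDet_eq_det (lam := 0) fun _ _ => rfl, ← Matrix.det_submatrix_equiv_self Fin.revPerm]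
  congr 1
  ext i j
  simp only [shiftedHankel, Matrix.submatrix_apply, Matrix.of_apply, Fin.revPerm_apply, Fin.rev_rev,
    Pi.zero_apply, add_zero]

theorem schurDet_eq_zero_of_le {j : ℕ} (hnj : n ≤ j) (hj : lam j ≠ 0) : schurDet n m lam = 0 :=
  schurDet_eq_zero fun h => hj (h j hnj)

theorem schurDet_update_eq_det {j : ℕ} (hj : j < n) (v : ℕ) (hlam : ∀ k, n ≤ k → lam k = 0) :
    schurDet n m (Function.update lam j v) = (shiftedHankel n m (Function.update lam j v)).det :=
  schurDet_eq_det fun k hk => by rw [Function.update_of_ne (by lia), hlam k hk]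

/-- Columns `i` and `j` of the shifted Hankel matrix coincide. -/
theorem schurDet_eq_zero_of_add_eq_add {i j : ℕ} (hij : i < j) (h : lam j + i = lam i + j) :
    schurDet n m lam = 0 := by
  rcases le_or_gt n j with hnj | hjn
  · exact schurDet_eq_zero_of_le hnj (by lia)
  by_cases hlam : ∀ k, n ≤ k → lam k = 0
  swap
  · exact schurDet_eq_zero hlam
  rw [schurDet_eq_det hlam]
  refine Matrix.det_zero_of_column_eq (i := ⟨i, hij.trans hjn⟩) (j := ⟨j, hjn⟩) (by simp [hij.ne])
    fun k => ?_
  simp only [shiftedHankel, Matrix.of_apply, Fin.val_rev]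
  congr 1
  lia

/-- Columns `j` and `j + 1` of the two shifted Hankel matrices are interchanged. -/
theorem schurDet_eq_neg_of_swap {lam' : ℕ → ℕ} (j : ℕ) (hj : lam' j + 1 = lam (j + 1))
    (hj_succ : lam' (j + 1) = lam j + 1) (hne : ∀ k, k ≠ j → k ≠ j + 1 → lam' k = lam k) :
    schurDet n m lam' = -schurDet n m lam := by
  rcases le_or_gt n (j + 1) with hnj | hjn
  · rw [schurDet_eq_zero_of_le hnj (by lia), schurDet_eq_zero_of_le hnj (by lia), neg_zero]
  have tail_iff : (∀ k, n ≤ k → lam' k = 0) ↔ ∀ k, n ≤ k → lam k = 0 :=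
    forall₂_congr fun k hk => by rw [hne k (by lia) (by lia)]
  let p : Fin n := ⟨j, by lia⟩
  let q : Fin n := ⟨j + 1, hjn⟩
  have hpq : p ≠ q := by simp [p, q]
  have hswap : shiftedHankel n m lam' = (shiftedHankel n m lam).submatrix id (Equiv.swap p q) := by
    ext i k
    simp only [shiftedHankel, Matrix.submatrix_apply, Matrix.of_apply, id, Fin.val_rev]
    congr 1
    rcases eq_or_ne k p with rfl | hkp
    · simp only [Equiv.swap_apply_left, p, q]
      lia
    rcases eq_or_ne k q with rfl | hkq
    · simp only [Equiv.swap_apply_right, p, q]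
      lia
    · rw [Equiv.swap_apply_of_ne_of_ne hkp hkq, hne k (Fin.val_ne_of_ne hkp) (Fin.val_ne_of_ne hkq)]
  by_cases hlam : ∀ k, n ≤ k → lam k = 0
  · rw [schurDet_eq_det hlam, schurDet_eq_det (tail_iff.2 hlam), hswap, Matrix.det_permute',
      Equiv.Perm.sign_swap hpq]
    simp
  · rw [schurDet_eq_zero hlam, schurDet_eq_zero (tail_iff.not.2 hlam), neg_zero]

/-- Replacing the row lengths `lam p`, `lam q` inserts two new columns at the places `p`, `q`;
moving a column from one place to the other changes its row length by `q - p`. -/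
theorem schurDet_mul_schurDet_update {p q : ℕ} (hpq : p < q) (v w : ℕ) :
    schurDet n m lam *
        schurDet n m (Function.update (Function.update lam p v) q (w + (q - p))) =
      schurDet n m (Function.update lam p v) * schurDet n m (Function.update lam q (w + (q - p))) -
        schurDet n m (Function.update lam q (v + (q - p))) *
          schurDet n m (Function.update lam p w) := by
  rcases le_or_gt n q with hnq | hqn
  · have vanish (μ : ℕ → ℕ) (u : ℕ) : schurDet n m (Function.update μ q (u + (q - p))) = 0 :=
      schurDet_eq_zero_of_le hnq (by rw [Function.update_self]; lia)
    simp only [vanish, mul_zero, zero_mul, sub_zero]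
  by_cases hlam : ∀ k, n ≤ k → lam k = 0
  · have hlam_p (k : ℕ) (hk : n ≤ k) : Function.update lam p v k = 0 := by
      rw [Function.update_of_ne (by lia), hlam k hk]
    have hpn : p < n := hpq.trans hqn
    let p' : Fin n := ⟨p, hpn⟩
    let q' : Fin n := ⟨q, hqn⟩
    have col_p (u : ℕ) := shiftedHankel_update m lam p' u
    have col_q (μ : ℕ → ℕ) (u : ℕ) := shiftedHankel_update_add_sub m μ (p := p') (q := q') hpq.le u
    rw [schurDet_update_eq_det hqn _ hlam_p, schurDet_update_eq_det hpn _ hlam,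
      schurDet_update_eq_det hqn _ hlam, schurDet_update_eq_det hqn _ hlam,
      schurDet_update_eq_det hpn _ hlam, schurDet_eq_det hlam,
      col_q, col_q, col_q, col_p, col_p]
    exact det_mul_det_updateCol_updateCol _ (by simp [p', q', hpq.ne]) _ _
  · push Not at hlam
    obtain ⟨k, hnk, hk⟩ := hlam
    have vanish (j u : ℕ) (hj : j < n) : schurDet n m (Function.update lam j u) = 0 :=
      schurDet_eq_zero_of_le hnk (by rwa [Function.update_of_ne (by lia)])
    rw [schurDet_eq_zero_of_le hnk hk, vanish p v (by lia), vanish p w (by lia)]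
    ring

end SchurDeterminant

section SchurDeterminantDeriv

variable {𝕜 : Type*} [NontriviallyNormedField 𝕜] {m : ℕ → 𝕜 → 𝕜} {s : 𝕜} {k : ℕ}

theorem hasDerivAt_schurDet (n : ℕ) (lam : ℕ → ℕ) (hm : ∀ a, HasDerivAt (m a) (m (a + k) s) s) :
    HasDerivAt (fun x => schurDet n (m · x) lam)
      (∑ j ∈ Finset.range n, schurDet n (m · s) (Function.update lam j (lam j + k))) s := by
  by_cases hlam : ∀ j, n ≤ j → lam j = 0
  · simp only [schurDet_eq_det hlam]
    refine (hasDerivAt_matrix_det (A := fun x => shiftedHankel n (m · x) lam)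
      (A' := Matrix.of fun i j : Fin n => m (i.rev + j.rev + lam j + k) s)
      fun i j => hm _).congr_deriv ?_
    rw [Finset.sum_range]
    refine Finset.sum_congr rfl fun j _ => ?_
    rw [schurDet_update_eq_det j.isLt _ hlam, shiftedHankel_update]
    simp only [add_assoc]
    rfl
  · push Not at hlam
    obtain ⟨i, hni, hi⟩ := hlam
    simp only [schurDet_eq_zero_of_le hni hi]
    refine (hasDerivAt_const s 0).congr_deriv (Finset.sum_eq_zero fun j hj => ?_).symm
    have hij : i ≠ j := by
      have := Finset.mem_range.1 hj
      lia
    exact schurDet_eq_zero_of_le hni (by rwa [Function.update_of_ne hij])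

/-- If `lam` has at most `L - k` parts, only the first `L` rows contribute: lengthening a later row
by `k` reproduces the column standing `k` places before it. -/
theorem hasDerivAt_schurDet_of_parts (n : ℕ) {lam : ℕ → ℕ} {L : ℕ} (hk : 0 < k)
    (hlam : ∀ j, L ≤ j + k → lam j = 0) (hkL : k ≤ L)
    (hm : ∀ a, HasDerivAt (m a) (m (a + k) s) s) :
    HasDerivAt (fun x => schurDet n (m · x) lam)
      (∑ j ∈ Finset.range L, schurDet n (m · s) (Function.update lam j (lam j + k))) s := by
  refine (hasDerivAt_schurDet n lam hm).congr_deriv ?_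
  trans ∑ j ∈ Finset.range (max n L), schurDet n (m · s) (Function.update lam j (lam j + k))
  · refine Finset.sum_subset (Finset.range_mono (le_max_left n L)) fun j _ hj => ?_
    refine schurDet_eq_zero_of_le (j := j) (by simpa using hj) ?_
    rw [Function.update_self]
    lia
  · refine (Finset.sum_subset (Finset.range_mono (le_max_right n L)) fun j _ hj => ?_).symm
    have hLj : L ≤ j := by simpa using hj
    refine schurDet_eq_zero_of_add_eq_add (i := j - k) (j := j) (by lia) ?_
    rw [Function.update_self, Function.update_of_ne (by lia), hlam j (by lia),
      hlam (j - k) (by lia)]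
    lia

end SchurDeterminantDeriv

section FourRows

/-- The row lengths `a, b, c, d, 0, 0, …`, so that `schurDet n m (rows a b c d)` plays the role of
the Schur function `s_(a,b,c,d)`. They need not be decreasing. -/
def rows (a b c d : ℕ) : ℕ → ℕ
  | 0 => a
  | 1 => b
  | 2 => c
  | 3 => d
  | _ => 0

theorem rows_zero : rows 0 0 0 0 = 0 := by
  funext j
  rcases j with _ | _ | _ | _ | j <;> rfl

variable (a b c d v : ℕ)

theorem update_rows_zero : Function.update (rows a b c d) 0 v = rows v b c d := by
  funext j
  rcases j with _ | _ | _ | _ | j <;> rfl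

theorem update_rows_one : Function.update (rows a b c d) 1 v = rows a v c d := by
  funext j
  rcases j with _ | _ | _ | _ | j <;> rfl

theorem update_rows_two : Function.update (rows a b c d) 2 v = rows a b v d := by
  funext j
  rcases j with _ | _ | _ | _ | j <;> rfl

theorem update_rows_three : Function.update (rows a b c d) 3 v = rows a b c v := by
  funext j
  rcases j with _ | _ | _ | _ | j <;> rfl

variable {a b c d} {R : Type*} [CommRing R] {n : ℕ} {m : ℕ → R}

theorem schurDet_rows_eq_zero (h : b = a + 1 ∨ c = b + 1 ∨ d = c + 1) :
    schurDet n m (rows a b c d) = 0 := by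
  rcases h with rfl | rfl | rfl
  · exact schurDet_eq_zero_of_add_eq_add (i := 0) (j := 1) one_pos rfl
  · exact schurDet_eq_zero_of_add_eq_add (i := 1) (j := 2) one_lt_two rfl
  · exact schurDet_eq_zero_of_add_eq_add (i := 2) (j := 3) (Nat.lt_succ_self 2) rfl

theorem schurDet_rows_swap_zero_one (h : a + 1 < b) :
    schurDet n m (rows a b c d) = -schurDet n m (rows (b - 1) (a + 1) c d) := by
  refine schurDet_eq_neg_of_swap 0 ?_ ?_ fun k hk hk_succ => ?_
  · rfl
  · simp only [rows]
    lia
  · rcases k with _ | _ | _ | _ | k <;> first | rfl | contradiction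

theorem schurDet_rows_swap_one_two (h : b + 1 < c) :
    schurDet n m (rows a b c d) = -schurDet n m (rows a (c - 1) (b + 1) d) := by
  refine schurDet_eq_neg_of_swap 1 ?_ ?_ fun k hk hk_succ => ?_
  · rfl
  · simp only [rows]
    lia
  · rcases k with _ | _ | _ | _ | k <;> first | rfl | contradiction

theorem schurDet_rows_swap_two_three (h : c + 1 < d) :
    schurDet n m (rows a b c d) = -schurDet n m (rows a b (d - 1) (c + 1)) := by
  refine schurDet_eq_neg_of_swap 2 ?_ ?_ fun k hk hk_succ => ?_
  · rfl
  · simp only [rows]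
    lia
  · rcases k with _ | _ | _ | _ | k <;> first | rfl | contradiction

theorem schurDet_plucker_two_two (n : ℕ) (m : ℕ → R) :
    schurDet n m (rows 0 0 0 0) * schurDet n m (rows 2 2 0 0) -
        schurDet n m (rows 1 0 0 0) * schurDet n m (rows 2 1 0 0) +
      schurDet n m (rows 2 0 0 0) * schurDet n m (rows 1 1 0 0) = 0 := by
  have h := schurDet_mul_schurDet_update (n := n) (m := m) (lam := rows 0 0 0 0) one_pos 2 1
  simp only [update_rows_zero, update_rows_one, Nat.reduceAdd, Nat.reduceSub] at h
  rw [schurDet_rows_swap_zero_one (a := 0) (b := 2) (by simp),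
    schurDet_rows_swap_zero_one (a := 0) (b := 3) (by simp)] at h
  linear_combination h

end FourRows

theorem hasDerivAt_schurDet_rows {𝕜 : Type*} [NontriviallyNormedField 𝕜] {m : ℕ → 𝕜 → 𝕜} {s : 𝕜}
    {k : ℕ} (n : ℕ) {a b c d : ℕ} (hk : 0 < k) (hk4 : k ≤ 4)
    (hrows : ∀ j, 4 ≤ j + k → rows a b c d j = 0)
    (hm : ∀ i, HasDerivAt (m i) (m (i + k) s) s) :
    HasDerivAt (fun x => schurDet n (m · x) (rows a b c d))
      (schurDet n (m · s) (rows (a + k) b c d) + schurDet n (m · s) (rows a (b + k) c d) +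
        schurDet n (m · s) (rows a b (c + k) d) + schurDet n (m · s) (rows a b c (d + k))) s := by
  refine (hasDerivAt_schurDet_of_parts n hk hrows hk4 hm).congr_deriv ?_
  simp only [Finset.sum_range_succ, Finset.sum_range_zero, zero_add, update_rows_zero,
    update_rows_one, update_rows_two, update_rows_three]
  rfl

section LogDeriv

variable {f f₁ f₂ f₃ f₄ : ℝ → ℝ}

theorem iteratedDeriv_two_log (hf : ∀ x, f x ≠ 0) (h₁ : ∀ x, HasDerivAt f (f₁ x) x)
    (h₂ : ∀ x, HasDerivAt f₁ (f₂ x) x) :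
    iteratedDeriv 2 (fun s => log (f s)) = fun x => f₂ x / f x - f₁ x ^ 2 / f x ^ 2 := by
  have iteratedDeriv_one_log : iteratedDeriv 1 (fun s => log (f s)) = fun x => f₁ x / f x := by
    rw [iteratedDeriv_one]
    exact funext fun x => ((h₁ x).log (hf x)).deriv
  rw [iteratedDeriv_succ, iteratedDeriv_one_log]
  funext x
  have hx := hf x
  rw [((h₂ x).fun_div (h₁ x) hx).deriv]
  field_simp

theorem iteratedDeriv_three_log (hf : ∀ x, f x ≠ 0) (h₁ : ∀ x, HasDerivAt f (f₁ x) x)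
    (h₂ : ∀ x, HasDerivAt f₁ (f₂ x) x) (h₃ : ∀ x, HasDerivAt f₂ (f₃ x) x) :
    iteratedDeriv 3 (fun s => log (f s)) =
      fun x => f₃ x / f x - 3 * f₁ x * f₂ x / f x ^ 2 + 2 * f₁ x ^ 3 / f x ^ 3 := by
  rw [iteratedDeriv_succ, iteratedDeriv_two_log hf h₁ h₂]
  funext x
  have hx := hf x
  rw [(((h₃ x).fun_div (h₁ x) hx).fun_sub
    (((h₂ x).fun_pow 2).fun_div ((h₁ x).fun_pow 2) (pow_ne_zero 2 hx))).deriv]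
  field_simp
  push_cast
  ring

theorem iteratedDeriv_four_log (hf : ∀ x, f x ≠ 0) (h₁ : ∀ x, HasDerivAt f (f₁ x) x)
    (h₂ : ∀ x, HasDerivAt f₁ (f₂ x) x) (h₃ : ∀ x, HasDerivAt f₂ (f₃ x) x)
    (h₄ : ∀ x, HasDerivAt f₃ (f₄ x) x) :
    iteratedDeriv 4 (fun s => log (f s)) = fun x =>
      f₄ x / f x - 4 * f₁ x * f₃ x / f x ^ 2 - 3 * f₂ x ^ 2 / f x ^ 2 +
        12 * f₁ x ^ 2 * f₂ x / f x ^ 3 - 6 * f₁ x ^ 4 / f x ^ 4 := by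
  rw [iteratedDeriv_succ, iteratedDeriv_three_log hf h₁ h₂ h₃]
  funext x
  have hx := hf x
  rw [((((h₄ x).fun_div (h₁ x) hx).fun_sub ((((h₂ x).const_mul 3).fun_mul (h₃ x)).fun_div
    ((h₁ x).fun_pow 2) (pow_ne_zero 2 hx))).fun_add ((((h₂ x).fun_pow 3).const_mul 2).fun_div
    ((h₁ x).fun_pow 3) (pow_ne_zero 3 hx))).deriv]
  field_simp
  push_cast
  ring

end LogDeriv

section Jet

/-- Derivatives of `f(t₁, t₂, t₃)` entering the first KP equation for `log f`; `d₁₃` is the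
`t₁`-derivative of the `t₃`-derivative. -/
structure KPJet (f : ℝ → ℝ → ℝ → ℝ) where
  (d₁ d₁₁ d₁₁₁ d₁₁₁₁ d₂ d₂₂ d₃ d₁₃ : ℝ → ℝ → ℝ → ℝ)
  hasDerivAt_d₁ : ∀ t₁ t₂ t₃, HasDerivAt (f · t₂ t₃) (d₁ t₁ t₂ t₃) t₁
  hasDerivAt_d₁₁ : ∀ t₁ t₂ t₃, HasDerivAt (d₁ · t₂ t₃) (d₁₁ t₁ t₂ t₃) t₁
  hasDerivAt_d₁₁₁ : ∀ t₁ t₂ t₃, HasDerivAt (d₁₁ · t₂ t₃) (d₁₁₁ t₁ t₂ t₃) t₁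
  hasDerivAt_d₁₁₁₁ : ∀ t₁ t₂ t₃, HasDerivAt (d₁₁₁ · t₂ t₃) (d₁₁₁₁ t₁ t₂ t₃) t₁
  hasDerivAt_d₂ : ∀ t₁ t₂ t₃, HasDerivAt (f t₁ · t₃) (d₂ t₁ t₂ t₃) t₂
  hasDerivAt_d₂₂ : ∀ t₁ t₂ t₃, HasDerivAt (d₂ t₁ · t₃) (d₂₂ t₁ t₂ t₃) t₂
  hasDerivAt_d₃ : ∀ t₁ t₂ t₃, HasDerivAt (f t₁ t₂ ·) (d₃ t₁ t₂ t₃) t₃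
  hasDerivAt_d₁₃ : ∀ t₁ t₂ t₃, HasDerivAt (d₃ · t₂ t₃) (d₁₃ t₁ t₂ t₃) t₁

namespace KPJet

variable {f : ℝ → ℝ → ℝ → ℝ}

/-- Half of Hirota's bilinear form `(D₁⁴ + 3 D₂² - 4 D₁ D₃) f · f`. -/
def hirota (J : KPJet f) (t₁ t₂ t₃ : ℝ) : ℝ :=
  f t₁ t₂ t₃ * J.d₁₁₁₁ t₁ t₂ t₃ - 4 * J.d₁ t₁ t₂ t₃ * J.d₁₁₁ t₁ t₂ t₃ + 3 * J.d₁₁ t₁ t₂ t₃ ^ 2 +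
    3 * (f t₁ t₂ t₃ * J.d₂₂ t₁ t₂ t₃ - J.d₂ t₁ t₂ t₃ ^ 2) -
    4 * (f t₁ t₂ t₃ * J.d₁₃ t₁ t₂ t₃ - J.d₁ t₁ t₂ t₃ * J.d₃ t₁ t₂ t₃)

/-- The derivatives of `c * f`. -/
def constMul (J : KPJet f) (c : ℝ) : KPJet fun t₁ t₂ t₃ => c * f t₁ t₂ t₃ where
  d₁ t₁ t₂ t₃ := c * J.d₁ t₁ t₂ t₃
  d₁₁ t₁ t₂ t₃ := c * J.d₁₁ t₁ t₂ t₃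
  d₁₁₁ t₁ t₂ t₃ := c * J.d₁₁₁ t₁ t₂ t₃
  d₁₁₁₁ t₁ t₂ t₃ := c * J.d₁₁₁₁ t₁ t₂ t₃
  d₂ t₁ t₂ t₃ := c * J.d₂ t₁ t₂ t₃
  d₂₂ t₁ t₂ t₃ := c * J.d₂₂ t₁ t₂ t₃
  d₃ t₁ t₂ t₃ := c * J.d₃ t₁ t₂ t₃
  d₁₃ t₁ t₂ t₃ := c * J.d₁₃ t₁ t₂ t₃
  hasDerivAt_d₁ t₁ t₂ t₃ := (J.hasDerivAt_d₁ t₁ t₂ t₃).const_mul c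
  hasDerivAt_d₁₁ t₁ t₂ t₃ := (J.hasDerivAt_d₁₁ t₁ t₂ t₃).const_mul c
  hasDerivAt_d₁₁₁ t₁ t₂ t₃ := (J.hasDerivAt_d₁₁₁ t₁ t₂ t₃).const_mul c
  hasDerivAt_d₁₁₁₁ t₁ t₂ t₃ := (J.hasDerivAt_d₁₁₁₁ t₁ t₂ t₃).const_mul c
  hasDerivAt_d₂ t₁ t₂ t₃ := (J.hasDerivAt_d₂ t₁ t₂ t₃).const_mul c
  hasDerivAt_d₂₂ t₁ t₂ t₃ := (J.hasDerivAt_d₂₂ t₁ t₂ t₃).const_mul c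
  hasDerivAt_d₃ t₁ t₂ t₃ := (J.hasDerivAt_d₃ t₁ t₂ t₃).const_mul c
  hasDerivAt_d₁₃ t₁ t₂ t₃ := (J.hasDerivAt_d₁₃ t₁ t₂ t₃).const_mul c

theorem hirota_constMul (J : KPJet f) (c t₁ t₂ t₃ : ℝ) :
    (J.constMul c).hirota t₁ t₂ t₃ = c ^ 2 * J.hirota t₁ t₂ t₃ := by
  simp only [hirota, constMul]
  ring

theorem log_kp (J : KPJet f) (hf : ∀ t₁ t₂ t₃, f t₁ t₂ t₃ ≠ 0) {t₁ t₂ t₃ : ℝ}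
    (hJ : J.hirota t₁ t₂ t₃ = 0) :
    iteratedDeriv 4 (fun s => log (f s t₂ t₃)) t₁ +
        3 * iteratedDeriv 2 (fun s => log (f t₁ s t₃)) t₂ -
        4 * deriv (fun s₁ => deriv (fun s₃ => log (f s₁ t₂ s₃)) t₃) t₁ +
        6 * iteratedDeriv 2 (fun s => log (f s t₂ t₃)) t₁ ^ 2 = 0 := by
  have deriv_t₃ : (fun s => deriv (fun s₃ => log (f s t₂ s₃)) t₃) =
      fun s => J.d₃ s t₂ t₃ / f s t₂ t₃ :=
    funext fun s => ((J.hasDerivAt_d₃ s t₂ t₃).log (hf s t₂ t₃)).deriv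
  have hf₀ := hf t₁ t₂ t₃
  rw [iteratedDeriv_four_log (hf · t₂ t₃) (J.hasDerivAt_d₁ · t₂ t₃) (J.hasDerivAt_d₁₁ · t₂ t₃)
      (J.hasDerivAt_d₁₁₁ · t₂ t₃) (J.hasDerivAt_d₁₁₁₁ · t₂ t₃),
    iteratedDeriv_two_log (hf · t₂ t₃) (J.hasDerivAt_d₁ · t₂ t₃) (J.hasDerivAt_d₁₁ · t₂ t₃),
    iteratedDeriv_two_log (hf t₁ · t₃) (J.hasDerivAt_d₂ t₁ · t₃) (J.hasDerivAt_d₂₂ t₁ · t₃),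
    deriv_t₃, ((J.hasDerivAt_d₁₃ t₁ t₂ t₃).fun_div (J.hasDerivAt_d₁ t₁ t₂ t₃) hf₀).deriv]
  rw [hirota] at hJ
  field_simp
  linear_combination f t₁ t₂ t₃ ^ 2 * hJ

end KPJet

/-- Functions `m a` of the times `t₁, t₂, t₃` with `∂ m a / ∂ t_k = m (a + k)`, as for the moments
`m a = ∫ z ^ a * exp (t₁ z + t₂ z² + t₃ z³) dμ(z)`. -/
structure IsMomentFamily (m : ℕ → ℝ → ℝ → ℝ → ℝ) : Prop where
  hasDerivAt_t₁ : ∀ a t₁ t₂ t₃, HasDerivAt (m a · t₂ t₃) (m (a + 1) t₁ t₂ t₃) t₁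
  hasDerivAt_t₂ : ∀ a t₁ t₂ t₃, HasDerivAt (m a t₁ · t₃) (m (a + 2) t₁ t₂ t₃) t₂
  hasDerivAt_t₃ : ∀ a t₁ t₂ t₃, HasDerivAt (m a t₁ t₂ ·) (m (a + 3) t₁ t₂ t₃) t₃

namespace IsMomentFamily

variable {m : ℕ → ℝ → ℝ → ℝ → ℝ} {a b c : ℕ}

theorem hasDerivAt_schurDet_t₁ (hm : IsMomentFamily m) (n : ℕ) (t₁ t₂ t₃ : ℝ) :
    HasDerivAt (fun s => schurDet n (m · s t₂ t₃) (rows a b c 0))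
      (schurDet n (m · t₁ t₂ t₃) (rows (a + 1) b c 0) +
        schurDet n (m · t₁ t₂ t₃) (rows a (b + 1) c 0) +
        schurDet n (m · t₁ t₂ t₃) (rows a b (c + 1) 0) +
        schurDet n (m · t₁ t₂ t₃) (rows a b c 1)) t₁ :=
  hasDerivAt_schurDet_rows n one_pos (by simp)
    (fun j hj => by rcases j with _ | _ | _ | _ | j <;> first | rfl | lia)
    fun i => hm.hasDerivAt_t₁ i t₁ t₂ t₃

theorem hasDerivAt_schurDet_t₂ (hm : IsMomentFamily m) (n : ℕ) (t₁ t₂ t₃ : ℝ) :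
    HasDerivAt (fun s => schurDet n (m · t₁ s t₃) (rows a b 0 0))
      (schurDet n (m · t₁ t₂ t₃) (rows (a + 2) b 0 0) +
        schurDet n (m · t₁ t₂ t₃) (rows a (b + 2) 0 0) +
        schurDet n (m · t₁ t₂ t₃) (rows a b 2 0) +
        schurDet n (m · t₁ t₂ t₃) (rows a b 0 2)) t₂ :=
  hasDerivAt_schurDet_rows n two_pos (by simp)
    (fun j hj => by rcases j with _ | _ | _ | _ | j <;> first | rfl | lia)
    fun i => hm.hasDerivAt_t₂ i t₁ t₂ t₃

theorem hasDerivAt_schurDet_t₃ (hm : IsMomentFamily m) (n : ℕ) (t₁ t₂ t₃ : ℝ) :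
    HasDerivAt (fun s => schurDet n (m · t₁ t₂ s) (rows a 0 0 0))
      (schurDet n (m · t₁ t₂ t₃) (rows (a + 3) 0 0 0) +
        schurDet n (m · t₁ t₂ t₃) (rows a 3 0 0) +
        schurDet n (m · t₁ t₂ t₃) (rows a 0 3 0) +
        schurDet n (m · t₁ t₂ t₃) (rows a 0 0 3)) t₃ :=
  hasDerivAt_schurDet_rows n three_pos (by simp)
    (fun j hj => by rcases j with _ | _ | _ | _ | j <;> first | rfl | lia)
    fun i => hm.hasDerivAt_t₃ i t₁ t₂ t₃

/-- The derivatives of `s_∅`: under `∂ / ∂ t_k` the Schur functions of the moments obey the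
Murnaghan–Nakayama rule. -/
def schurJet (hm : IsMomentFamily m) (n : ℕ) :
    KPJet fun t₁ t₂ t₃ => schurDet n (m · t₁ t₂ t₃) (rows 0 0 0 0) :=
  let S t₁ t₂ t₃ a b c d := schurDet n (m · t₁ t₂ t₃) (rows a b c d)
  { d₁ t₁ t₂ t₃ := S t₁ t₂ t₃ 1 0 0 0
    d₁₁ t₁ t₂ t₃ := S t₁ t₂ t₃ 2 0 0 0 + S t₁ t₂ t₃ 1 1 0 0
    d₁₁₁ t₁ t₂ t₃ := S t₁ t₂ t₃ 3 0 0 0 + 2 * S t₁ t₂ t₃ 2 1 0 0 + S t₁ t₂ t₃ 1 1 1 0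
    d₁₁₁₁ t₁ t₂ t₃ := S t₁ t₂ t₃ 4 0 0 0 + 3 * S t₁ t₂ t₃ 3 1 0 0 + 2 * S t₁ t₂ t₃ 2 2 0 0 +
      3 * S t₁ t₂ t₃ 2 1 1 0 + S t₁ t₂ t₃ 1 1 1 1
    d₂ t₁ t₂ t₃ := S t₁ t₂ t₃ 2 0 0 0 - S t₁ t₂ t₃ 1 1 0 0
    d₂₂ t₁ t₂ t₃ := S t₁ t₂ t₃ 4 0 0 0 - S t₁ t₂ t₃ 3 1 0 0 + 2 * S t₁ t₂ t₃ 2 2 0 0 -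
      S t₁ t₂ t₃ 2 1 1 0 + S t₁ t₂ t₃ 1 1 1 1
    d₃ t₁ t₂ t₃ := S t₁ t₂ t₃ 3 0 0 0 - S t₁ t₂ t₃ 2 1 0 0 + S t₁ t₂ t₃ 1 1 1 0
    d₁₃ t₁ t₂ t₃ := S t₁ t₂ t₃ 4 0 0 0 - S t₁ t₂ t₃ 2 2 0 0 + S t₁ t₂ t₃ 1 1 1 1
    hasDerivAt_d₁ t₁ t₂ t₃ := by
      refine (hm.hasDerivAt_schurDet_t₁ n t₁ t₂ t₃).congr_deriv ?_
      simp (disch := decide) only [schurDet_rows_eq_zero, Nat.reduceAdd, add_zero, S]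
    hasDerivAt_d₁₁ t₁ t₂ t₃ := by
      refine (hm.hasDerivAt_schurDet_t₁ n t₁ t₂ t₃).congr_deriv ?_
      simp (disch := decide) only [schurDet_rows_eq_zero, Nat.reduceAdd, add_zero, S]
    hasDerivAt_d₁₁₁ t₁ t₂ t₃ := by
      have h {a b c} := hm.hasDerivAt_schurDet_t₁ n t₁ t₂ t₃ (a := a) (b := b) (c := c)
      refine (h.add h).congr_deriv ?_
      simp (disch := decide) only [schurDet_rows_eq_zero, Nat.reduceAdd, S]
      ring
    hasDerivAt_d₁₁₁₁ t₁ t₂ t₃ := by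
      have h {a b c} := hm.hasDerivAt_schurDet_t₁ n t₁ t₂ t₃ (a := a) (b := b) (c := c)
      refine ((h.add (h.const_mul 2)).add h).congr_deriv ?_
      simp (disch := decide) only [schurDet_rows_eq_zero, Nat.reduceAdd, S]
      ring
    hasDerivAt_d₂ t₁ t₂ t₃ := by
      refine (hm.hasDerivAt_schurDet_t₂ n t₁ t₂ t₃).congr_deriv ?_
      simp (disch := decide) only [schurDet_rows_eq_zero, schurDet_rows_swap_zero_one,
        schurDet_rows_swap_one_two, schurDet_rows_swap_two_three, Nat.reduceAdd, Nat.reduceSub, S]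
      ring
    hasDerivAt_d₂₂ t₁ t₂ t₃ := by
      have h {a b} := hm.hasDerivAt_schurDet_t₂ n t₁ t₂ t₃ (a := a) (b := b)
      refine (h.sub h).congr_deriv ?_
      simp (disch := decide) only [schurDet_rows_eq_zero, schurDet_rows_swap_zero_one,
        schurDet_rows_swap_one_two, schurDet_rows_swap_two_three, Nat.reduceAdd, Nat.reduceSub, S]
      ring
    hasDerivAt_d₃ t₁ t₂ t₃ := by
      refine (hm.hasDerivAt_schurDet_t₃ n t₁ t₂ t₃).congr_deriv ?_
      simp (disch := decide) only [schurDet_rows_eq_zero, schurDet_rows_swap_zero_one,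
        schurDet_rows_swap_one_two, schurDet_rows_swap_two_three, Nat.reduceAdd, Nat.reduceSub, S]
      ring
    hasDerivAt_d₁₃ t₁ t₂ t₃ := by
      have h {a b c} := hm.hasDerivAt_schurDet_t₁ n t₁ t₂ t₃ (a := a) (b := b) (c := c)
      refine ((h.sub h).add h).congr_deriv ?_
      simp (disch := decide) only [schurDet_rows_eq_zero, Nat.reduceAdd, S]
      ring }

theorem hirota_schurJet (hm : IsMomentFamily m) (n : ℕ) (t₁ t₂ t₃ : ℝ) :
    (hm.schurJet n).hirota t₁ t₂ t₃ = 0 := by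
  have plucker := schurDet_plucker_two_two n (m · t₁ t₂ t₃)
  simp only [KPJet.hirota, schurJet]
  linear_combination 12 * plucker

end IsMomentFamily

end Jet

section ExponentialFamily

theorem abs_mul_exp_mul_le {s x g : ℝ} (hx : |x - s| ≤ 1) :
    |g| * exp (x * g) ≤ exp ((s + 2) * g) + exp ((s - 2) * g) := by
  obtain ⟨hsx, hxs⟩ := abs_le.1 hx
  rcases le_total 0 g with hg | hg
  · calc |g| * exp (x * g) ≤ exp g * exp ((s + 1) * g) := by
          rw [abs_of_nonneg hg]
          gcongr
          · linarith [add_one_le_exp g]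
          · linarith
      _ = exp ((s + 2) * g) := by rw [← exp_add]; ring_nf
      _ ≤ _ := le_add_of_nonneg_right (exp_pos _).le
  · calc |g| * exp (x * g) ≤ exp (-g) * exp ((s - 1) * g) := by
          rw [abs_of_nonpos hg]
          gcongr ?_ * exp ?_
          · linarith [add_one_le_exp (-g)]
          · nlinarith
      _ = exp ((s - 2) * g) := by rw [← exp_add]; ring_nf
      _ ≤ _ := le_add_of_nonneg_left (exp_pos _).le

theorem integrable_mul_and_hasDerivAt_integral {α : Type*} [MeasurableSpace α] {μ : Measure α}
    {g : α → ℝ} {F : ℝ → α → ℝ} (hg : AEStronglyMeasurable g μ) (hF : ∀ s, Integrable (F s) μ)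
    (hF_exp : ∀ s x, F s x = exp (s * g x) * F 0 x) (s : ℝ) :
    Integrable (fun x => g x * F s x) μ ∧
      HasDerivAt (fun s => ∫ x, F s x ∂μ) (∫ x, g x * F s x ∂μ) s := by
  refine hasDerivAt_integral_of_dominated_loc_of_deriv_le (F' := fun s x => g x * F s x)
    (bound := fun x => ‖F (s + 2) x‖ + ‖F (s - 2) x‖) (Metric.ball_mem_nhds s one_pos)
    (Eventually.of_forall fun s => (hF s).aestronglyMeasurable) (hF s)
    (hg.mul (hF s).aestronglyMeasurable) ?_ ((hF _).norm.add (hF _).norm) ?_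
  · refine Eventually.of_forall fun x r hr => ?_
    have hrs : |r - s| ≤ 1 := (Metric.mem_ball.1 hr).le
    simp only [hF_exp r, hF_exp (s + 2), hF_exp (s - 2), norm_mul, norm_eq_abs, abs_exp,
      ← mul_assoc, ← add_mul]
    gcongr
    exact abs_mul_exp_mul_le hrs
  · refine Eventually.of_forall fun x r _ => ?_
    rw [funext fun r => hF_exp r x]
    refine (((hasDerivAt_mul_const (g x)).exp).mul_const (F 0 x)).congr_deriv ?_
    rw [hF_exp r]
    ring

end ExponentialFamily

section CubicMoment

/-- The weight `ρ` deformed by the three KP times. -/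
def cubicWeight (ρ : ℝ → ℝ) (t₁ t₂ t₃ z : ℝ) : ℝ :=
  exp (t₁ * z + t₂ * z ^ 2 + t₃ * z ^ 3) * ρ z

/-- The moments of the deformed weight with respect to `μ`. -/
def cubicMoment (μ : Measure ℝ) (ρ : ℝ → ℝ) (a : ℕ) (t₁ t₂ t₃ : ℝ) : ℝ :=
  ∫ z, z ^ a * cubicWeight ρ t₁ t₂ t₃ z ∂μ

variable {ρ : ℝ → ℝ} {μ : Measure ℝ}

theorem pow_mul_cubicWeight_t₁ (a : ℕ) (s t₂ t₃ z : ℝ) :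
    z ^ a * cubicWeight ρ s t₂ t₃ z = exp (s * z) * (z ^ a * cubicWeight ρ 0 t₂ t₃ z) := by
  simp only [cubicWeight, exp_add, zero_mul, exp_zero]
  ring

theorem pow_mul_cubicWeight_t₂ (a : ℕ) (t₁ s t₃ z : ℝ) :
    z ^ a * cubicWeight ρ t₁ s t₃ z = exp (s * z ^ 2) * (z ^ a * cubicWeight ρ t₁ 0 t₃ z) := by
  simp only [cubicWeight, exp_add, zero_mul, exp_zero]
  ring

theorem pow_mul_cubicWeight_t₃ (a : ℕ) (t₁ t₂ s z : ℝ) :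
    z ^ a * cubicWeight ρ t₁ t₂ s z = exp (s * z ^ 3) * (z ^ a * cubicWeight ρ t₁ t₂ 0 z) := by
  simp only [cubicWeight, exp_add, zero_mul, exp_zero]
  ring

theorem integrable_pow_mul_cubicWeight
    (hρ : ∀ t₁ t₂ t₃, Integrable (cubicWeight ρ t₁ t₂ t₃) μ) (a : ℕ) (t₁ t₂ t₃ : ℝ) :
    Integrable (fun z => z ^ a * cubicWeight ρ t₁ t₂ t₃ z) μ := by
  induction a generalizing t₁ with
  | zero => simpa using hρ t₁ t₂ t₃
  | succ a ih =>
    simpa only [pow_succ', mul_assoc, id] using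
      (integrable_mul_and_hasDerivAt_integral aestronglyMeasurable_id ih
        (fun s z => pow_mul_cubicWeight_t₁ a s t₂ t₃ z) t₁).1

theorem isMomentFamily_cubicMoment
    (hρ : ∀ t₁ t₂ t₃, Integrable (cubicWeight ρ t₁ t₂ t₃) μ) :
    IsMomentFamily (cubicMoment μ ρ) := by
  have hint := integrable_pow_mul_cubicWeight hρ
  have integral_pow_add (k a : ℕ) (t₁ t₂ t₃ : ℝ) :
      ∫ z, z ^ k * (z ^ a * cubicWeight ρ t₁ t₂ t₃ z) ∂μ = cubicMoment μ ρ (a + k) t₁ t₂ t₃ := by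
    simp only [cubicMoment, pow_add, mul_left_comm, mul_assoc]
  have hpow (k : ℕ) : AEStronglyMeasurable (fun z : ℝ => z ^ k) μ :=
    (continuous_pow k).aestronglyMeasurable
  refine ⟨fun a t₁ t₂ t₃ => ?_, fun a t₁ t₂ t₃ => ?_, fun a t₁ t₂ t₃ => ?_⟩
  · rw [← integral_pow_add]
    refine (integrable_mul_and_hasDerivAt_integral (hpow 1) (hint a · t₂ t₃) ?_ t₁).2
    simpa only [pow_one] using (pow_mul_cubicWeight_t₁ a · t₂ t₃)
  · rw [← integral_pow_add]
    exact (integrable_mul_and_hasDerivAt_integral (hpow 2) (hint a t₁ · t₃)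
      (pow_mul_cubicWeight_t₂ a t₁ · t₃) t₂).2
  · rw [← integral_pow_add]
    exact (integrable_mul_and_hasDerivAt_integral (hpow 3) (hint a t₁ t₂ ·)
      (pow_mul_cubicWeight_t₃ a t₁ t₂ ·) t₃).2

end CubicMoment

section Vandermonde

variable {n : ℕ}

theorem vdm_sq (z : Fin n → ℝ) : vdm z ^ 2 = (Matrix.vandermonde z).det ^ 2 := by
  simp only [Matrix.det_vandermonde, vdm, ← Finset.prod_pow]
  exact Finset.prod_congr rfl fun i _ => Finset.prod_congr rfl fun j _ => sub_sq_comm _ _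

theorem vdm_sq_mul_prod (w : ℝ → ℝ) (z : Fin n → ℝ) :
    vdm z ^ 2 * ∏ k, w (z k) =
      (Matrix.of fun i k : Fin n => z k ^ (i : ℕ)).det *
        (Matrix.of fun i k : Fin n => z k ^ (i : ℕ) * w (z k)).det := by
  have det_powers : (Matrix.of fun i k : Fin n => z k ^ (i : ℕ)).det = (Matrix.vandermonde z).det :=
    Matrix.det_transpose (Matrix.vandermonde z)
  have det_weighted :=
    Matrix.det_mul_row (fun k => w (z k)) (Matrix.of fun i k : Fin n => z k ^ (i : ℕ))
  simp only [Matrix.of_apply, mul_comm (w _)] at det_weighted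
  rw [det_weighted, det_powers, vdm_sq]
  ring

theorem ae_apply_ne_apply {ι : Type*} [Fintype ι] {i j : ι} (hij : i ≠ j) :
    ∀ᵐ z : ι → ℝ, z i ≠ z j := by
  classical
  let diagonal : Submodule ℝ (ι → ℝ) := LinearMap.ker
    ((LinearMap.proj i : (ι → ℝ) →ₗ[ℝ] ℝ) - LinearMap.proj j)
  have mem_diagonal (z : ι → ℝ) : z ∈ diagonal ↔ z i = z j := by
    simp [diagonal, sub_eq_zero]
  have diagonal_ne_top : diagonal ≠ ⊤ := fun h => by
    have : Pi.single i 1 ∈ diagonal := h ▸ Submodule.mem_top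
    simp [mem_diagonal, hij.symm] at this
  refine measure_mono_null (fun z hz => ?_)
    (Measure.addHaar_submodule volume diagonal diagonal_ne_top)
  exact (mem_diagonal z).2 (not_not.1 hz)

theorem ae_vdm_ne_zero (n : ℕ) : ∀ᵐ z : Fin n → ℝ, vdm z ≠ 0 := by
  have distinct : ∀ᵐ z : Fin n → ℝ, ∀ i, ∀ j ∈ Finset.Ioi i, z i ≠ z j := by
    simp only [eventually_all]
    exact fun i j hj => ae_apply_ne_apply (Finset.mem_Ioi.1 hj).ne
  filter_upwards [distinct] with z hz
  exact Finset.prod_ne_zero_iff.2 fun i _ => Finset.prod_ne_zero_iff.2 fun j hj =>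
    sub_ne_zero.2 (hz i j hj)

variable {μ : Measure ℝ} [SigmaFinite μ] {w : ℝ → ℝ}

theorem integrable_vdm_sq_mul_prod (n : ℕ) (hw : ∀ a : ℕ, Integrable (fun x => x ^ a * w x) μ) :
    Integrable (fun z : Fin n → ℝ => vdm z ^ 2 * ∏ k, w (z k)) (Measure.pi fun _ => μ) := by
  simp only [vdm_sq_mul_prod]
  refine integrable_det_mul_det (f := fun (i : Fin n) x => x ^ (i : ℕ))
    (g := fun (j : Fin n) x => x ^ (j : ℕ) * w x) fun i j => ?_
  simpa only [pow_add, mul_assoc] using hw (i + j)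

theorem integral_vdm_sq_mul_prod (n : ℕ) (hw : ∀ a : ℕ, Integrable (fun x => x ^ a * w x) μ) :
    ∫ z : Fin n → ℝ, vdm z ^ 2 * ∏ k, w (z k) ∂(Measure.pi fun _ => μ) =
      n.factorial * (Matrix.of fun i j : Fin n => ∫ x, x ^ (i + j : ℕ) * w x ∂μ).det := by
  have andreief := integral_det_mul_det (μ := μ) (f := fun (i : Fin n) x => x ^ (i : ℕ))
    (g := fun (j : Fin n) x => x ^ (j : ℕ) * w x)
  simp only [← mul_assoc, ← pow_add, Fintype.card_fin] at andreief
  simp only [vdm_sq_mul_prod]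
  exact andreief fun i j => hw (i + j)

end Vandermonde

section Tau

variable {I : Set ℝ} {ρ : ℝ → ℝ}

theorem tau9_eq_integral_pi (I : Set ℝ) (ρ : ℝ → ℝ) (n : ℕ) (t₁ t₂ t₃ : ℝ) :
    tau9 I ρ n t₁ t₂ t₃ = ∫ z : Fin n → ℝ, vdm z ^ 2 * ∏ k, cubicWeight ρ t₁ t₂ t₃ (z k)
      ∂Measure.pi fun _ => volume.restrict I := by
  rw [tau9, volume_pi, Measure.restrict_pi_pi]
  rfl

theorem tau9_eq_factorial_mul_schurDet
    (hρ : ∀ t₁ t₂ t₃, IntegrableOn (cubicWeight ρ t₁ t₂ t₃) I) (n : ℕ) (t₁ t₂ t₃ : ℝ) :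
    tau9 I ρ n t₁ t₂ t₃ =
      n.factorial * schurDet n (cubicMoment (volume.restrict I) ρ · t₁ t₂ t₃) (rows 0 0 0 0) := by
  rw [tau9_eq_integral_pi, rows_zero, schurDet_zero]
  exact integral_vdm_sq_mul_prod n fun a => integrable_pow_mul_cubicWeight hρ a t₁ t₂ t₃

theorem tau9_pos (hρ : ∀ t₁ t₂ t₃, IntegrableOn (cubicWeight ρ t₁ t₂ t₃) I)
    (hρ_nonneg : ∀ᵐ z ∂volume.restrict I, 0 ≤ ρ z)
    (hρ_ne : ¬∀ᵐ z ∂volume.restrict I, ρ z = 0) (n : ℕ) (t₁ t₂ t₃ : ℝ) :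
    0 < tau9 I ρ n t₁ t₂ t₃ := by
  have integrand_nonneg : 0 ≤ᵐ[Measure.pi fun _ : Fin n => volume.restrict I]
      fun z => vdm z ^ 2 * ∏ k, cubicWeight ρ t₁ t₂ t₃ (z k) := by
    have hρ_pi : ∀ᵐ z ∂Measure.pi fun _ : Fin n => volume.restrict I, ∀ k, 0 ≤ ρ (z k) :=
      eventually_all.2 fun k =>
        (Measure.tendsto_eval_ae_ae (μ := fun _ => volume.restrict I)).eventually hρ_nonneg
    filter_upwards [hρ_pi] with z hz
    exact mul_nonneg (sq_nonneg _) (Finset.prod_nonneg fun k _ => mul_nonneg (exp_pos _).le (hz k))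
  have vdm_null : (Measure.pi fun _ : Fin n => volume.restrict I) {z | vdm z = 0} = 0 := by
    have := ae_restrict_of_ae (s := Set.univ.pi fun _ => I) (ae_vdm_ne_zero n)
    rw [volume_pi, Measure.restrict_pi_pi, ae_iff] at this
    simpa only [not_not] using this
  rw [tau9_eq_integral_pi, integral_pos_iff_support_of_nonneg_ae integrand_nonneg
    (integrable_vdm_sq_mul_prod n fun a => integrable_pow_mul_cubicWeight hρ a t₁ t₂ t₃)]
  calc 0 < (Measure.pi fun _ : Fin n => volume.restrict I)
          (Set.univ.pi fun _ => {z | ρ z ≠ 0}) := by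
        rw [Measure.pi_pi]
        exact pos_iff_ne_zero.2 (Finset.prod_ne_zero_iff.2 fun k _ => hρ_ne)
    _ = (Measure.pi fun _ : Fin n => volume.restrict I)
          ((Set.univ.pi fun _ => {z | ρ z ≠ 0}) \ {z | vdm z = 0}) :=
        (measure_sdiff_null vdm_null).symm
    _ ≤ _ := measure_mono fun z ⟨hz, hvdm⟩ => mul_ne_zero (pow_ne_zero 2 hvdm)
        (Finset.prod_ne_zero_iff.2 fun k _ => mul_ne_zero (exp_ne_zero _) (hz k trivial))

end Tau

theorem statement9_general (I : Set ℝ) (ρ : ℝ → ℝ) (n : ℕ)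
    (hρ : ∀ t₁ t₂ t₃, IntegrableOn (cubicWeight ρ t₁ t₂ t₃) I)
    (hρ_nonneg : ∀ᵐ z ∂volume.restrict I, 0 ≤ ρ z)
    (hρ_ne : ¬∀ᵐ z ∂volume.restrict I, ρ z = 0) :
    (∀ t₁ t₂ t₃ : ℝ, 0 < tau9 I ρ n t₁ t₂ t₃) ∧
    ∀ t₁ t₂ t₃ : ℝ,
      iteratedDeriv 4 (fun s => Real.log (tau9 I ρ n s t₂ t₃)) t₁ +
        3 * iteratedDeriv 2 (fun s => Real.log (tau9 I ρ n t₁ s t₃)) t₂ -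
        4 * deriv (fun s₁ => deriv (fun s₃ => Real.log (tau9 I ρ n s₁ t₂ s₃)) t₃) t₁ +
        6 * (iteratedDeriv 2 (fun s => Real.log (tau9 I ρ n s t₂ t₃)) t₁) ^ 2 = 0 := by
  have tau_pos := tau9_pos hρ hρ_nonneg hρ_ne n
  refine ⟨tau_pos, fun t₁ t₂ t₃ => ?_⟩
  have tau_ne_zero (s₁ s₂ s₃ : ℝ) := (tau_pos s₁ s₂ s₃).ne'
  simp only [tau9_eq_factorial_mul_schurDet hρ] at tau_ne_zero ⊢
  let J := (isMomentFamily_cubicMoment hρ).schurJet n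
  refine (J.constMul n.factorial).log_kp tau_ne_zero ?_
  rw [KPJet.hirota_constMul, IsMomentFamily.hirota_schurJet, mul_zero]

/-- `τ > 0`, and `log τ` satisfies the first KP equation
`∂⁴_{t₁} log τ + 3 ∂²_{t₂} log τ − 4 ∂²_{t₁t₃} log τ + 6 (∂²_{t₁} log τ)² = 0`. -/
theorem statement9 (I : Set ℝ) (ρ : ℝ → ℝ) (n : ℕ) (hn : 1 ≤ n)
    (hI : ∃ (m : ℕ) (c d : Fin m → ℝ), I = ⋃ i, Set.Icc (c i) (d i))
    (hρcont : ContinuousOn ρ I) (hρ0 : ∀ z ∈ I, 0 ≤ ρ z)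
    (hρne : ¬ (∀ᵐ z ∂(volume.restrict I), ρ z = 0)) :
    (∀ t₁ t₂ t₃ : ℝ, 0 < tau9 I ρ n t₁ t₂ t₃) ∧
    ∀ t₁ t₂ t₃ : ℝ,
      iteratedDeriv 4 (fun s => Real.log (tau9 I ρ n s t₂ t₃)) t₁ +
        3 * iteratedDeriv 2 (fun s => Real.log (tau9 I ρ n t₁ s t₃)) t₂ -
        4 * deriv (fun s₁ => deriv (fun s₃ => Real.log (tau9 I ρ n s₁ t₂ s₃)) t₃) t₁ +
        6 * (iteratedDeriv 2 (fun s => Real.log (tau9 I ρ n s t₂ t₃)) t₁) ^ 2 = 0 := by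
  obtain ⟨m, c, d, rfl⟩ := hI
  have hI : IsCompact (⋃ i, Set.Icc (c i) (d i)) := isCompact_iUnion fun i => isCompact_Icc
  refine statement9_general _ ρ n (fun t₁ t₂ t₃ => ContinuousOn.integrableOn_compact hI ?_)
    (ae_restrict_of_forall_mem hI.measurableSet hρ0) hρne
  exact ContinuousOn.mul (by fun_prop) hρcont

end
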